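/- Let s ∈ [1,3), T > 0, and z ∈ G^s([0,T]), i.e. there exist M > 0, R > 0 with |z^{(i)}(t)| ≤ M (i!)^s / R^i for all i ∈ ℕ and t ∈ [0,T]. Then the series y(x,t) = Σ_{i≥0} g_i(x) z^{(i)}(t), with g_i the generating functions for P = ∂ₓ³ + a∂ₓ, converges in C^∞([-1,0]×[0,T]); the sum y is Gevrey of order s/3 in x and s in t, and solves ∂ₜy + ∂ₓ³y + a∂ₓy = 0 on (-1,0)×(0,T) with y(0,t) = ∂ₓy(0,t) = 0 and ∂ₓ²y(0,t) = z(t). -/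

import Mathlib

/-! Integrating `gᵢ''' + a gᵢ' = -gᵢ₋₁` once gives an oscillator equation for `gᵢ`, which Duhamel's
formula solves by two more integrations; hence `gᵢ⁽ᵐ⁾` is at most
`(1 + |a|) ^ m * A ^ (i + 1) / (3 * i + 2 - m)!` on `[-1, 0]`. Up to geometric factors
`(i + n)! ^ s ≲ i! ^ s n! ^ s` and `i! ^ s ≲ m! ^ (s / 3) (3 * i + 2 - m)! ^ (s / 3)`; because
`s < 3`, the remaining power of `(3 * i + 2 - m)!` beats every geometric factor. The `i`-th term of
the series differentiated `m` times in `x` and `n` times in `t` is therefore at most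
`2 ^ (-i) C W ^ m m! ^ (s / 3) Q ^ n n! ^ s`. By Borel's theorem the terms extend smoothly to the
plane with bounds of the same product form, so the series may be differentiated termwise there, and
the equation follows by telescoping. -/

open Set Filter
open scoped ContDiff Topology Nat

section SmoothSeries

variable {F : Type*} [NormedAddCommGroup F] [NormedSpace ℝ F] [CompleteSpace F]

theorem contDiff_infty_tsum {ι : Type*} {f : ι → ℝ → F} {v : ℕ → ι → ℝ}
    (hf : ∀ i, ContDiff ℝ ∞ (f i)) (hv : ∀ k, Summable (v k))
    (hfv : ∀ k i t, ‖iteratedDeriv k (f i) t‖ ≤ v k i) :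
    ContDiff ℝ ∞ fun t => ∑' i, f i t :=
  contDiff_tsum hf (fun k _ => hv k) fun k i t _ => by
    rw [norm_iteratedFDeriv_eq_norm_iteratedDeriv]
    exact hfv k i t

theorem iteratedDeriv_tsum {ι : Type*} {f : ι → ℝ → F} {v : ℕ → ι → ℝ}
    (hf : ∀ i, ContDiff ℝ ∞ (f i)) (hv : ∀ k, Summable (v k))
    (hfv : ∀ k i t, ‖iteratedDeriv k (f i) t‖ ≤ v k i) (k : ℕ) :
    iteratedDeriv k (fun t => ∑' i, f i t) = fun t => ∑' i, iteratedDeriv k (f i) t := by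
  have hfv' : ∀ (k : ℕ) i t, (k : ℕ∞) ≤ ⊤ → ‖iteratedFDeriv ℝ k (f i) t‖ ≤ v k i := by
    intro k i t _
    rw [norm_iteratedFDeriv_eq_norm_iteratedDeriv]
    exact hfv k i t
  rw [iteratedDeriv_eq_equiv_comp, iteratedFDeriv_tsum hf (fun k _ => hv k) hfv' le_top]
  simp only [iteratedDeriv_eq_equiv_comp, Function.comp_def]
  funext t
  exact (ContinuousMultilinearMap.piFieldEquiv ℝ (Fin k) F).symm.toContinuousLinearEquiv.map_tsum

end SmoothSeries

section Borel

theorem exists_hasCompactSupport_iteratedDeriv_zero_eq_ite (n : ℕ) :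
    ∃ ψ : ℝ → ℝ, ContDiff ℝ ∞ ψ ∧ HasCompactSupport ψ ∧
      ∀ k, iteratedDeriv k ψ 0 = if k = n then 1 else 0 := by
  let χ : ContDiffBump (0 : ℝ) := default
  have hχ : ContDiff ℝ ∞ χ := χ.contDiff
  refine ⟨fun t => (n ! : ℝ)⁻¹ * (t ^ n * χ t), by fun_prop,
    (χ.hasCompactSupport.mul_left (f := fun t => t ^ n)).mul_left, fun k => ?_⟩
  have hψ : (fun t => (n ! : ℝ)⁻¹ * (t ^ n * χ t)) =ᶠ[𝓝 0] fun t => (n ! : ℝ)⁻¹ * t ^ n := by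
    filter_upwards [χ.eventuallyEq_one] with t ht
    rw [ht, Pi.one_apply, mul_one]
  rw [hψ.iteratedDeriv_eq, iteratedDeriv_const_mul_field, iteratedDeriv_fun_pow_zero]
  split_ifs with h
  · exact inv_mul_cancel₀ (by positivity)
  · rw [Nat.cast_zero, mul_zero]

theorem exists_forall_norm_iteratedDeriv_le {F : Type*} [NormedAddCommGroup F] [NormedSpace ℝ F]
    {ψ : ℝ → F} (hψ : ContDiff ℝ ∞ ψ) (hψc : HasCompactSupport ψ) :
    ∃ P : ℕ → ℝ, ∀ k t, ‖iteratedDeriv k ψ t‖ ≤ P k := by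
  have hbound : ∀ k, ∃ P, ∀ t, ‖iteratedDeriv k ψ t‖ ≤ P := fun k => by
    simp only [← norm_iteratedFDeriv_eq_norm_iteratedDeriv]
    exact (hψc.iteratedFDeriv k).exists_bound_of_continuous
      (hψ.continuous_iteratedFDeriv (mod_cast le_top))
  exact ⟨_, fun k => (hbound k).choose_spec⟩

theorem iteratedDeriv_pow_mul_comp_inv_mul {ψ : ℝ → ℝ} (hψ : ContDiff ℝ ∞ ψ) (ε : ℝ) (n k : ℕ)
    (t : ℝ) : iteratedDeriv k (fun t => ε ^ n * ψ (ε⁻¹ * t)) t =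
      ε ^ n * (ε⁻¹ ^ k * iteratedDeriv k ψ (ε⁻¹ * t)) := by
  rw [iteratedDeriv_const_mul_field,
    iteratedDeriv_comp_const_mul (hψ.of_le (mod_cast le_top))]

-- Rescaling `ψ` to `ε ^ n * ψ (t / ε)` keeps the `n`-th derivative at `0` and multiplies the
-- bounds on the lower derivatives by positive powers of `ε`.
theorem exists_iteratedDeriv_zero_eq_ite_of_small (n : ℕ) {δ : ℝ} (hδ : 0 < δ) :
    ∃ (η : ℝ → ℝ) (P : ℕ → ℝ), ContDiff ℝ ∞ η ∧ (∀ k t, ‖iteratedDeriv k η t‖ ≤ P k) ∧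
      (∀ k < n, P k ≤ δ) ∧ ∀ k, iteratedDeriv k η 0 = if k = n then 1 else 0 := by
  obtain ⟨ψ, hψ, hψc, hψ0⟩ := exists_hasCompactSupport_iteratedDeriv_zero_eq_ite n
  obtain ⟨P, hP⟩ := exists_forall_norm_iteratedDeriv_le hψ hψc
  have hP0 : ∀ k, 0 ≤ P k := fun k => (norm_nonneg _).trans (hP k 0)
  obtain ⟨ε, hε0, hε1, hε⟩ : ∃ ε : ℝ, 0 < ε ∧ ε ≤ 1 ∧ ∀ k < n, ε * P k ≤ δ := by
    have hsmall : ∀ᶠ ε in 𝓝[>] (0 : ℝ), ∀ k ∈ Finset.range n, ε * P k ≤ δ :=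
      (Finset.eventually_all _).2 fun k _ => nhdsWithin_le_nhds <|
        ((continuous_mul_const (P k)).tendsto' 0 0 (zero_mul _)).eventually_le_const hδ
    obtain ⟨ε, hε, hε'⟩ := (hsmall.and (Ioc_mem_nhdsGT one_pos)).exists
    exact ⟨ε, hε'.1, hε'.2, fun k hk => hε k (Finset.mem_range.2 hk)⟩
  refine ⟨fun t => ε ^ n * ψ (ε⁻¹ * t), fun k => ε ^ n * (ε⁻¹ ^ k * P k), by fun_prop,
    fun k t => ?_, fun k hk => ?_, fun k => ?_⟩
  · rw [iteratedDeriv_pow_mul_comp_inv_mul hψ, norm_mul, norm_mul,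
      Real.norm_of_nonneg (by positivity), Real.norm_of_nonneg (by positivity)]
    exact mul_le_mul_of_nonneg_left (mul_le_mul_of_nonneg_left (hP k _) (by positivity))
      (by positivity)
  · have hpow : ε ^ n * ε⁻¹ ^ k ≤ ε := by
      rw [inv_pow, ← pow_sub₀ _ hε0.ne' hk.le]
      exact pow_le_of_le_one hε0.le hε1 (by omega)
    calc ε ^ n * (ε⁻¹ ^ k * P k) = ε ^ n * ε⁻¹ ^ k * P k := by ring
      _ ≤ ε * P k := mul_le_mul_of_nonneg_right hpow (hP0 k)
      _ ≤ δ := hε k hk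
  · rw [iteratedDeriv_pow_mul_comp_inv_mul hψ, mul_zero, hψ0]
    split_ifs with h
    · rw [h, mul_one, ← mul_pow, mul_inv_cancel₀ hε0.ne', one_pow]
    · rw [mul_zero, mul_zero]

theorem summable_abs_mul_of_le_div {c : ℕ → ℝ} {P : ℕ → ℕ → ℝ} (hP0 : ∀ n k, 0 ≤ P n k)
    (hP : ∀ n, ∀ k < n, P n k ≤ (1 / 2) ^ n / (|c n| + 1)) (k : ℕ) :
    Summable fun n => |c n| * P n k := by
  refine Summable.of_norm_bounded_eventually_nat summable_geometric_two ?_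
  filter_upwards [eventually_gt_atTop k] with n hkn
  rw [Real.norm_of_nonneg (mul_nonneg (abs_nonneg _) (hP0 n k))]
  calc |c n| * P n k ≤ (|c n| + 1) * ((1 / 2) ^ n / (|c n| + 1)) := by
        gcongr
        · exact hP0 n k
        · linarith
        · exact hP n k hkn
    _ = (1 / 2) ^ n := mul_div_cancel₀ _ (by positivity)

-- Borel's lemma. The bound is linear in the size `w` of the jet because the function constructed
-- depends linearly on the jet.
theorem exists_contDiff_iteratedDeriv_eq (F : Type*) [NormedAddCommGroup F] [NormedSpace ℝ F]
    [CompleteSpace F] (c : ℕ → ℝ) :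
    ∃ K : ℕ → ℝ, ∀ (t₀ w : ℝ) (d : ℕ → F), 0 ≤ w → (∀ n, ‖d n‖ ≤ w * c n) →
      ∃ B : ℝ → F, ContDiff ℝ ∞ B ∧ (∀ k, iteratedDeriv k B t₀ = d k) ∧
        ∀ k t, ‖iteratedDeriv k B t‖ ≤ w * K k := by
  choose η P hη hηP hPδ hη0 using fun n => exists_iteratedDeriv_zero_eq_ite_of_small n
    (show 0 < (1 / 2 : ℝ) ^ n / (|c n| + 1) by positivity)
  have hP0 : ∀ n k, 0 ≤ P n k := fun n k => (norm_nonneg _).trans (hηP n k 0)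
  have hsum : ∀ k, Summable fun n => |c n| * P n k := summable_abs_mul_of_le_div hP0 hPδ
  refine ⟨fun k => ∑' n, |c n| * P n k, fun t₀ w d hw hd => ?_⟩
  have hterm : ∀ k n t, iteratedDeriv k (fun t => η n t • d n) t = iteratedDeriv k (η n) t • d n :=
    fun k n t => iteratedDeriv_smul_const ((hη n).of_le (mod_cast le_top)).contDiffAt _
  have hbound : ∀ k n t, ‖iteratedDeriv k (fun t => η n t • d n) t‖ ≤ w * (|c n| * P n k) := by
    intro k n t
    rw [hterm, norm_smul]
    calc ‖iteratedDeriv k (η n) t‖ * ‖d n‖ ≤ P n k * (w * |c n|) := by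
          gcongr
          · exact hP0 n k
          · exact hηP n k t
          · exact (hd n).trans (mul_le_mul_of_nonneg_left (le_abs_self _) hw)
      _ = w * (|c n| * P n k) := by ring
  have hηd : ∀ n, ContDiff ℝ ∞ fun t => η n t • d n := fun n => (hη n).smul contDiff_const
  have hderiv := iteratedDeriv_tsum hηd (fun k => (hsum k).mul_left w) hbound
  have hB := contDiff_infty_tsum hηd (fun k => (hsum k).mul_left w) hbound
  refine ⟨fun t => ∑' n, η n (t - t₀) • d n, hB.comp (contDiff_id.sub contDiff_const),
    fun k => ?_, fun k t => ?_⟩ <;>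
    rw [iteratedDeriv_comp_sub_const k (fun t => ∑' n, η n t • d n), hderiv]
  · simp only [hterm, sub_self, hη0]
    rw [tsum_eq_single k fun n hn => by rw [if_neg hn.symm, zero_smul], if_pos rfl, one_smul]
  · exact tsum_of_norm_bounded ((hsum k).hasSum.mul_left w) fun n => hbound k n (t - t₀)

end Borel

section Extension

variable {F : Type*} [NormedAddCommGroup F] [NormedSpace ℝ F]

theorem hasDerivAt_piecewise_Iic {f f' h h' : ℝ → F} {c : ℝ} (hf : ∀ t, HasDerivAt f (f' t) t)
    (hh : ∀ t, HasDerivAt h (h' t) t) (hc : f c = h c) (hc' : f' c = h' c) (t : ℝ) :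
    HasDerivAt ((Iic c).piecewise f h) ((Iic c).piecewise f' h' t) t := by
  rcases lt_trichotomy t c with ht | rfl | ht
  · rw [piecewise_eq_of_mem _ _ _ (mem_Iic.2 ht.le)]
    refine (hf t).congr_of_eventuallyEq ?_
    filter_upwards [Iic_mem_nhds ht] with y hy using piecewise_eq_of_mem _ _ _ hy
  · rw [piecewise_eq_of_mem _ _ _ self_mem_Iic, ← hasDerivWithinAt_univ, ← Iic_union_Ici (a := t)]
    have hIci : EqOn ((Iic t).piecewise f h) h (Ici t) := fun y hy => by
      rcases (mem_Ici.1 hy).eq_or_lt with rfl | hty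
      · rw [piecewise_eq_of_mem _ _ _ self_mem_Iic, hc]
      · exact piecewise_eq_of_notMem _ _ _ (notMem_Iic.2 hty)
    exact ((hf t).hasDerivWithinAt.congr_of_mem (piecewise_eqOn _ _ _) self_mem_Iic).union
      (hc' ▸ (hh t).hasDerivWithinAt.congr_of_mem hIci self_mem_Ici)
  · rw [piecewise_eq_of_notMem _ _ _ (notMem_Iic.2 ht)]
    refine (hh t).congr_of_eventuallyEq ?_
    filter_upwards [Ioi_mem_nhds ht] with y hy
      using piecewise_eq_of_notMem _ _ _ (notMem_Iic.2 hy)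

theorem hasDerivAt_iteratedDeriv {f : ℝ → F} (hf : ContDiff ℝ ∞ f) (n : ℕ) (t : ℝ) :
    HasDerivAt (iteratedDeriv n f) (iteratedDeriv (n + 1) f t) t := by
  rw [iteratedDeriv_succ]
  exact (hf.differentiable_iteratedDeriv n (mod_cast ENat.natCast_lt_top n) t).hasDerivAt

theorem iteratedDeriv_piecewise_Iic {f h : ℝ → F} {c : ℝ} (hf : ContDiff ℝ ∞ f)
    (hh : ContDiff ℝ ∞ h) (hc : ∀ n, iteratedDeriv n f c = iteratedDeriv n h c) (n : ℕ) :
    iteratedDeriv n ((Iic c).piecewise f h) =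
      (Iic c).piecewise (iteratedDeriv n f) (iteratedDeriv n h) := by
  induction n with
  | zero => simp only [iteratedDeriv_zero]
  | succ n ih =>
    rw [iteratedDeriv_succ, ih]
    exact funext fun t => (hasDerivAt_piecewise_Iic (hasDerivAt_iteratedDeriv hf n)
      (hasDerivAt_iteratedDeriv hh n) (hc n) (hc (n + 1)) t).deriv

theorem contDiff_piecewise_Iic {f h : ℝ → F} {c : ℝ} (hf : ContDiff ℝ ∞ f)
    (hh : ContDiff ℝ ∞ h) (hc : ∀ n, iteratedDeriv n f c = iteratedDeriv n h c) :
    ContDiff ℝ ∞ ((Iic c).piecewise f h) := by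
  refine contDiff_of_differentiable_iteratedDeriv fun n _ => ?_
  rw [iteratedDeriv_piecewise_Iic hf hh hc]
  exact fun t => (hasDerivAt_piecewise_Iic (hasDerivAt_iteratedDeriv hf n)
    (hasDerivAt_iteratedDeriv hh n) (hc n) (hc (n + 1)) t).differentiableAt

theorem exists_contDiff_extension [CompleteSpace F] {p q : ℝ} (hpq : p ≤ q) (c : ℕ → ℝ) :
    ∃ K : ℕ → ℝ, ∀ (w : ℝ) (f : ℝ → F), 0 ≤ w → ContDiff ℝ ∞ f →
      (∀ n, ∀ t ∈ Icc p q, ‖iteratedDeriv n f t‖ ≤ w * c n) →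
      ∃ E : ℝ → F, ContDiff ℝ ∞ E ∧
        (∀ n, EqOn (iteratedDeriv n E) (iteratedDeriv n f) (Icc p q)) ∧
        ∀ n t, ‖iteratedDeriv n E t‖ ≤ w * K n := by
  obtain ⟨K, hK⟩ := exists_contDiff_iteratedDeriv_eq F c
  refine ⟨fun n => max (c n) (K n), fun w f hw hf hfc => ?_⟩
  obtain ⟨A, hA, hAp, hAK⟩ := hK p w _ hw fun n => hfc n p (left_mem_Icc.2 hpq)
  obtain ⟨B, hB, hBq, hBK⟩ := hK q w _ hw fun n => hfc n q (right_mem_Icc.2 hpq)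
  have hD := iteratedDeriv_piecewise_Iic hA hf hAp
  have hDf : ∀ n, EqOn (iteratedDeriv n ((Iic p).piecewise A f)) (iteratedDeriv n f) (Ici p) := by
    intro n t ht
    rw [hD]
    rcases (mem_Ici.1 ht).eq_or_lt with rfl | hpt
    · rw [piecewise_eq_of_mem _ _ _ self_mem_Iic, hAp]
    · exact piecewise_eq_of_notMem _ _ _ (notMem_Iic.2 hpt)
  have hDc : ContDiff ℝ ∞ ((Iic p).piecewise A f) := contDiff_piecewise_Iic hA hf hAp
  have hDq : ∀ n, iteratedDeriv n ((Iic p).piecewise A f) q = iteratedDeriv n B q := fun n =>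
    (hDf n hpq).trans (hBq n).symm
  have hE := iteratedDeriv_piecewise_Iic hDc hB hDq
  refine ⟨(Iic q).piecewise ((Iic p).piecewise A f) B, contDiff_piecewise_Iic hDc hB hDq,
    fun n t ht => ?_, fun n t => ?_⟩
  · rw [hE, piecewise_eq_of_mem _ _ _ (mem_Iic.2 ht.2), hDf n ht.1]
  · rw [hE]
    rcases le_or_gt t q with htq | hqt
    · rw [piecewise_eq_of_mem _ _ _ (mem_Iic.2 htq)]
      rcases lt_or_ge t p with htp | hpt
      · rw [hD, piecewise_eq_of_mem _ _ _ (mem_Iic.2 htp.le)]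
        exact (hAK n t).trans (mul_le_mul_of_nonneg_left (le_max_right _ _) hw)
      · rw [hDf n hpt]
        exact (hfc n t ⟨hpt, htq⟩).trans (mul_le_mul_of_nonneg_left (le_max_left _ _) hw)
    · rw [piecewise_eq_of_notMem _ _ _ (notMem_Iic.2 hqt)]
      exact (hBK n t).trans (mul_le_mul_of_nonneg_left (le_max_right _ _) hw)

end Extension

section TensorSeries

theorem norm_iteratedFDeriv_comp_continuousLinearMap_le {E : Type*} [NormedAddCommGroup E]
    [NormedSpace ℝ E] {f : ℝ → ℝ} (hf : ContDiff ℝ ∞ f) {L : E →L[ℝ] ℝ} (hL : ‖L‖ ≤ 1) (k : ℕ)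
    (q : E) : ‖iteratedFDeriv ℝ k (f ∘ L) q‖ ≤ ‖iteratedDeriv k f (L q)‖ := by
  rw [L.iteratedFDeriv_comp_right hf q (mod_cast le_top),
    ← norm_iteratedFDeriv_eq_norm_iteratedDeriv]
  refine (ContinuousMultilinearMap.norm_compContinuousLinearMap_le _ _).trans
    (mul_le_of_le_one_right (norm_nonneg _) ?_)
  exact Finset.prod_le_one (fun _ _ => norm_nonneg _) fun _ _ => hL

variable {ι : Type*} {U V : ι → ℝ → ℝ} {α β : ι → ℝ} {K L : ℕ → ℝ}

theorem norm_iteratedDeriv_mul_iteratedDeriv_le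
    (hUK : ∀ i m x, ‖iteratedDeriv m (U i) x‖ ≤ α i * K m)
    (hVL : ∀ i n t, ‖iteratedDeriv n (V i) t‖ ≤ β i * L n) (m n : ℕ) (i : ι) (x t : ℝ) :
    ‖iteratedDeriv m (U i) x * iteratedDeriv n (V i) t‖ ≤ α i * β i * (K m * L n) :=
  calc ‖iteratedDeriv m (U i) x * iteratedDeriv n (V i) t‖
      ≤ (α i * K m) * (β i * L n) := norm_mul_le_of_le (hUK i m x) (hVL i n t)
    _ = α i * β i * (K m * L n) := by ring

theorem contDiff_tsum_mul (hU : ∀ i, ContDiff ℝ ∞ (U i)) (hV : ∀ i, ContDiff ℝ ∞ (V i))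
    (hUK : ∀ i m x, ‖iteratedDeriv m (U i) x‖ ≤ α i * K m)
    (hVL : ∀ i n t, ‖iteratedDeriv n (V i) t‖ ≤ β i * L n) (hαβ : Summable fun i => α i * β i) :
    ContDiff ℝ ∞ fun q : ℝ × ℝ => ∑' i, U i q.1 * V i q.2 := by
  have hU₁ : ∀ i, ContDiff ℝ ∞ (U i ∘ ContinuousLinearMap.fst ℝ ℝ ℝ) := fun i =>
    (hU i).comp (ContinuousLinearMap.contDiff _)
  have hV₂ : ∀ i, ContDiff ℝ ∞ (V i ∘ ContinuousLinearMap.snd ℝ ℝ ℝ) := fun i =>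
    (hV i).comp (ContinuousLinearMap.contDiff _)
  refine contDiff_tsum (v := fun k i =>
    α i * β i * ∑ j ∈ Finset.range (k + 1), (k.choose j : ℝ) * (K j * L (k - j)))
    (fun i => (hU₁ i).mul (hV₂ i)) (fun k _ => hαβ.mul_right _) fun k i q _ => ?_
  refine (norm_iteratedFDeriv_mul_le (hU₁ i) (hV₂ i) q (mod_cast le_top)).trans ?_
  rw [Finset.mul_sum]
  refine Finset.sum_le_sum fun j _ => ?_
  calc (k.choose j : ℝ) * ‖iteratedFDeriv ℝ j (U i ∘ ContinuousLinearMap.fst ℝ ℝ ℝ) q‖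
        * ‖iteratedFDeriv ℝ (k - j) (V i ∘ ContinuousLinearMap.snd ℝ ℝ ℝ) q‖
      ≤ (k.choose j : ℝ) * ‖iteratedDeriv j (U i) q.1‖ * ‖iteratedDeriv (k - j) (V i) q.2‖ := by
        gcongr
        · exact norm_iteratedFDeriv_comp_continuousLinearMap_le (hU i)
            (ContinuousLinearMap.norm_fst_le ℝ ℝ ℝ) j q
        · exact norm_iteratedFDeriv_comp_continuousLinearMap_le (hV i)
            (ContinuousLinearMap.norm_snd_le ℝ ℝ ℝ) (k - j) q
    _ = (k.choose j : ℝ) * ‖iteratedDeriv j (U i) q.1 * iteratedDeriv (k - j) (V i) q.2‖ := by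
        rw [norm_mul, mul_assoc]
    _ ≤ (k.choose j : ℝ) * (α i * β i * (K j * L (k - j))) := by
        gcongr
        exact norm_iteratedDeriv_mul_iteratedDeriv_le hUK hVL j (k - j) i q.1 q.2
    _ = α i * β i * ((k.choose j : ℝ) * (K j * L (k - j))) := by ring

theorem iteratedDeriv_iteratedDeriv_tsum_mul (hU : ∀ i, ContDiff ℝ ∞ (U i))
    (hV : ∀ i, ContDiff ℝ ∞ (V i)) (hUK : ∀ i m x, ‖iteratedDeriv m (U i) x‖ ≤ α i * K m)
    (hVL : ∀ i n t, ‖iteratedDeriv n (V i) t‖ ≤ β i * L n) (hαβ : Summable fun i => α i * β i)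
    (m n : ℕ) (x t : ℝ) :
    iteratedDeriv m (fun x' => iteratedDeriv n (fun t' => ∑' i, U i x' * V i t') t) x =
      ∑' i, iteratedDeriv m (U i) x * iteratedDeriv n (V i) t := by
  have hbound := norm_iteratedDeriv_mul_iteratedDeriv_le hUK hVL
  have ht : ∀ x', iteratedDeriv n (fun t' => ∑' i, U i x' * V i t') t =
      ∑' i, U i x' * iteratedDeriv n (V i) t := fun x' => by
    rw [iteratedDeriv_tsum (v := fun k i => α i * β i * (K 0 * L k))
      (fun i => contDiff_const.mul (hV i)) (fun k => hαβ.mul_right _) fun k i t' => ?_]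
    · simp only [iteratedDeriv_const_mul_field]
    · simpa only [iteratedDeriv_const_mul_field, iteratedDeriv_zero] using hbound 0 k i x' t'
  simp only [ht]
  rw [iteratedDeriv_tsum (v := fun k i => α i * β i * (K k * L n))
    (fun i => (hU i).mul contDiff_const) (fun k => hαβ.mul_right _) fun k i x' => ?_]
  · simp only [iteratedDeriv_mul_const_field]
  · simpa only [iteratedDeriv_mul_const_field] using hbound k n i x' t

theorem exists_contDiff_hasSum_mul {f h : ι → ℝ → ℝ} {p q p' q' : ℝ} (hpq : p ≤ q) (hpq' : p' ≤ q')
    (hf : ∀ i, ContDiff ℝ ∞ (f i)) (hh : ∀ i, ContDiff ℝ ∞ (h i)) (hα : ∀ i, 0 ≤ α i)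
    (hβ : ∀ i, 0 ≤ β i) (hfK : ∀ i m, ∀ x ∈ Icc p q, ‖iteratedDeriv m (f i) x‖ ≤ α i * K m)
    (hhL : ∀ i n, ∀ t ∈ Icc p' q', ‖iteratedDeriv n (h i) t‖ ≤ β i * L n)
    (hαβ : Summable fun i => α i * β i) :
    ∃ y : ℝ → ℝ → ℝ, ContDiff ℝ ∞ (fun q : ℝ × ℝ => y q.1 q.2) ∧
      ∀ m n, ∀ x ∈ Icc p q, ∀ t ∈ Icc p' q',
        HasSum (fun i => iteratedDeriv m (f i) x * iteratedDeriv n (h i) t)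
          (iteratedDeriv m (fun x' => iteratedDeriv n (fun t' => y x' t') t) x) := by
  obtain ⟨K', hK'⟩ := exists_contDiff_extension (F := ℝ) hpq K
  obtain ⟨L', hL'⟩ := exists_contDiff_extension (F := ℝ) hpq' L
  choose U hU hUf hUK using fun i => hK' (α i) (f i) (hα i) (hf i) (hfK i)
  choose V hV hVh hVL using fun i => hL' (β i) (h i) (hβ i) (hh i) (hhL i)
  refine ⟨fun x t => ∑' i, U i x * V i t, contDiff_tsum_mul hU hV hUK hVL hαβ,
    fun m n x hx t ht => ?_⟩
  rw [iteratedDeriv_iteratedDeriv_tsum_mul hU hV hUK hVL hαβ]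
  simp only [← hUf _ m hx, ← hVh _ n ht]
  exact (Summable.of_norm_bounded (hαβ.mul_right (K' m * L' n)) fun i =>
    norm_iteratedDeriv_mul_iteratedDeriv_le hUK hVL m n i x t).hasSum

end TensorSeries

section Calculus

variable {F : Type*} [NormedAddCommGroup F] [NormedSpace ℝ F]

theorem eqOn_iteratedDeriv_of_uniqueDiffOn {f h : ℝ → F} {s : Set ℝ} (hf : ContDiff ℝ ∞ f)
    (hh : ContDiff ℝ ∞ h) (hs : UniqueDiffOn ℝ s) (hfh : EqOn f h s) (n : ℕ) :
    EqOn (iteratedDeriv n f) (iteratedDeriv n h) s := fun x hx => by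
  rw [← iteratedDerivWithin_eq_iteratedDeriv hs (hf.of_le (mod_cast le_top)).contDiffAt hx,
    ← iteratedDerivWithin_eq_iteratedDeriv hs (hh.of_le (mod_cast le_top)).contDiffAt hx,
    iteratedDerivWithin_congr hfh hx]

theorem iteratedDeriv_iteratedDeriv (f : ℝ → F) (m n : ℕ) :
    iteratedDeriv m (iteratedDeriv n f) = iteratedDeriv (m + n) f := by
  simp only [iteratedDeriv_eq_iterate, Function.iterate_add_apply]

theorem contDiff_iteratedDeriv {f : ℝ → F} (hf : ContDiff ℝ ∞ f) (n : ℕ) :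
    ContDiff ℝ ∞ (iteratedDeriv n f) :=
  contDiff_of_differentiable_iteratedDeriv fun m _ => by
    rw [iteratedDeriv_iteratedDeriv]
    exact hf.differentiable_iteratedDeriv _ (mod_cast ENat.natCast_lt_top _)

theorem norm_le_of_norm_deriv_le_pow_div_factorial {f f' : ℝ → F} {x₀ D : ℝ} {m : ℕ}
    (hx₀ : x₀ ≤ 0) (hf : ∀ x, HasDerivAt f (f' x) x) (hf0 : f 0 = 0)
    (hbound : ∀ x ∈ Icc x₀ 0, ‖f' x‖ ≤ D * (|x| ^ m / m !)) :
    ‖f x₀‖ ≤ D * (|x₀| ^ (m + 1) / (m + 1)!) := by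
  have hreflect : ∀ x, HasDerivAt (fun x => f (-x)) (-f' (-x)) x := fun x => by
    simpa [Function.comp_def] using (hf (-x)).scomp x (hasDerivAt_neg x)
  have hpow : ∀ x : ℝ, HasDerivAt (fun x : ℝ => D * (x ^ (m + 1) / (m + 1)!))
      (D * (x ^ m / m !)) x := fun x => by
    refine (((hasDerivAt_pow (m + 1) x).div_const ((m + 1)! : ℝ)).const_mul D).congr_deriv ?_
    rw [Nat.factorial_succ]
    push_cast
    field_simp
  have hle := image_norm_le_of_norm_deriv_right_le_deriv_boundary (a := 0) (b := -x₀)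
    (fun x _ => (hreflect x).continuousAt.continuousWithinAt)
    (fun x _ => (hreflect x).hasDerivWithinAt) (by simp [hf0]) hpow
    (fun x hx => by
      have hx' := hbound (-x) ⟨by linarith [hx.2], by linarith [hx.1]⟩
      rwa [abs_neg, abs_of_nonneg hx.1, ← norm_neg] at hx') (right_mem_Icc.2 (neg_nonneg.2 hx₀))
  rwa [neg_neg, ← abs_of_nonpos hx₀] at hle

end Calculus

section Oscillator

/-- A bound on `[-1, 0]` for the solution of `c'' + a c = 0`, `c 0 = 1`, `c' 0 = 0`, used to control
the generating functions. Since `√` is `0` on negative numbers, it equals `1` when `0 ≤ a`. -/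
noncomputable def oscillatorBound (a : ℝ) : ℝ :=
  Real.cosh √(-a)

theorem one_le_oscillatorBound (a : ℝ) : 1 ≤ oscillatorBound a :=
  Real.one_le_cosh _

theorem exists_oscillator_solution (a : ℝ) :
    ∃ c c' : ℝ → ℝ, (∀ x, HasDerivAt c (c' x) x) ∧ (∀ x, HasDerivAt c' (-a * c x) x) ∧
      c 0 = 1 ∧ c' 0 = 0 ∧ ∀ x ∈ Icc (-1 : ℝ) 0, |c x| ≤ oscillatorBound a := by
  rcases le_total 0 a with ha | ha
  · have hlin : ∀ x, HasDerivAt (fun x => √a * x) √a x := fun x => by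
      simpa using (hasDerivAt_id x).const_mul √a
    refine ⟨fun x => Real.cos (√a * x), fun x => -Real.sin (√a * x) * √a, fun x => (hlin x).cos,
      fun x => ((hlin x).sin.neg.mul_const √a).congr_deriv ?_, by simp, by simp,
      fun x _ => (Real.abs_cos_le_one _).trans (one_le_oscillatorBound a)⟩
    linear_combination -Real.cos (√a * x) * Real.mul_self_sqrt ha
  · have hlin : ∀ x, HasDerivAt (fun x => √(-a) * x) √(-a) x := fun x => by
      simpa using (hasDerivAt_id x).const_mul √(-a)
    refine ⟨fun x => Real.cosh (√(-a) * x), fun x => Real.sinh (√(-a) * x) * √(-a),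
      fun x => (hlin x).cosh, fun x => ((hlin x).sinh.mul_const √(-a)).congr_deriv ?_, by simp,
      by simp, fun x hx => ?_⟩
    · linear_combination Real.cosh (√(-a) * x) * Real.mul_self_sqrt (neg_nonneg.2 ha)
    · rw [abs_of_pos (Real.cosh_pos _), oscillatorBound, Real.cosh_le_cosh, abs_mul]
      exact mul_le_of_le_one_right (abs_nonneg _) (abs_le.2 ⟨hx.1, hx.2.trans zero_le_one⟩)

variable {a D : ℝ} {u u' u'' : ℝ → ℝ} {m : ℕ}

-- Duhamel's formula `u' x₀ = -∫ y in x₀..0, (u'' y + a * u y) * c (x₀ - y)` in differential form.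
theorem abs_deriv_le_of_abs_oscillator_le (hu : ∀ x, HasDerivAt u (u' x) x)
    (hu' : ∀ x, HasDerivAt u' (u'' x) x) (hu0 : u 0 = 0) (hu'0 : u' 0 = 0)
    (hbound : ∀ x ∈ Icc (-1 : ℝ) 0, |u'' x + a * u x| ≤ D * (|x| ^ m / m !)) {x₀ : ℝ}
    (hx₀ : x₀ ∈ Icc (-1 : ℝ) 0) :
    |u' x₀| ≤ oscillatorBound a * D * (|x₀| ^ (m + 1) / (m + 1)!) := by
  obtain ⟨c, c', hc, hc', hc0, hc'0, hcA⟩ := exists_oscillator_solution a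
  have hlin : ∀ y, HasDerivAt (fun y => x₀ - y) (-1) y := fun y => (hasDerivAt_id y).const_sub x₀
  have hW : ∀ y, HasDerivAt (fun y => u' y * c (x₀ - y) + u y * c' (x₀ - y))
      ((u'' y + a * u y) * c (x₀ - y)) y := fun y => by
    refine (((hu' y).mul ((hc _).comp y (hlin y))).add
      ((hu y).mul ((hc' _).comp y (hlin y)))).congr_deriv ?_
    simp only [Function.comp_apply]
    ring
  have hle := norm_le_of_norm_deriv_le_pow_div_factorial (D := oscillatorBound a * D) (m := m)
    hx₀.2 hW (by simp [hu0, hu'0]) fun y hy => ?_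
  · simpa [hc0, hc'0] using hle
  · have hy' : y ∈ Icc (-1 : ℝ) 0 := ⟨hx₀.1.trans hy.1, hy.2⟩
    have hcy := hcA (x₀ - y) ⟨by linarith [hx₀.1, hy.2], by linarith [hy.1]⟩
    calc ‖(u'' y + a * u y) * c (x₀ - y)‖
        ≤ D * (|y| ^ m / m !) * oscillatorBound a := norm_mul_le_of_le (hbound y hy') hcy
      _ = oscillatorBound a * D * (|y| ^ m / m !) := by ring

theorem abs_le_of_abs_oscillator_le (hu : ∀ x, HasDerivAt u (u' x) x)
    (hu' : ∀ x, HasDerivAt u' (u'' x) x) (hu0 : u 0 = 0) (hu'0 : u' 0 = 0)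
    (hbound : ∀ x ∈ Icc (-1 : ℝ) 0, |u'' x + a * u x| ≤ D * (|x| ^ m / m !)) {x₀ : ℝ}
    (hx₀ : x₀ ∈ Icc (-1 : ℝ) 0) :
    |u x₀| ≤ oscillatorBound a * D * (|x₀| ^ (m + 2) / (m + 2)!) :=
  norm_le_of_norm_deriv_le_pow_div_factorial hx₀.2 hu hu0 fun _ hx =>
    abs_deriv_le_of_abs_oscillator_le hu hu' hu0 hu'0 hbound ⟨hx₀.1.trans hx.1, hx.2⟩

end Oscillator

section GeneratingFamily

/-- `g` is the family of generating functions on `[-1, 0]` of the operator `P = ∂ₓ³ + a ∂ₓ`: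
`P g₀ = 0` and `P gᵢ₊₁ = -gᵢ`, where all `gᵢ` have vanishing Cauchy data at `0` except that
`g₀'' 0 = 1`. The functions are taken smooth on `ℝ`, but the equations hold on `[-1, 0]` only. -/
structure IsGeneratingFamily (a : ℝ) (g : ℕ → ℝ → ℝ) : Prop where
  contDiff : ∀ i, ContDiff ℝ ∞ (g i)
  ode_zero : ∀ x ∈ Icc (-1 : ℝ) 0, iteratedDeriv 3 (g 0) x + a * deriv (g 0) x = 0
  ode_succ : ∀ i, ∀ x ∈ Icc (-1 : ℝ) 0,
    iteratedDeriv 3 (g (i + 1)) x + a * deriv (g (i + 1)) x = -g i x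
  apply_zero : ∀ i, g i 0 = 0
  deriv_zero : ∀ i, deriv (g i) 0 = 0
  iteratedDeriv_two_zero : iteratedDeriv 2 (g 0) 0 = 1
  iteratedDeriv_two_succ : ∀ i, iteratedDeriv 2 (g (i + 1)) 0 = 0

theorem iteratedDeriv_add_three_of_ode {a : ℝ} {u r : ℝ → ℝ} {s : Set ℝ} (hu : ContDiff ℝ ∞ u)
    (hr : ContDiff ℝ ∞ r) (hs : UniqueDiffOn ℝ s)
    (hode : ∀ x ∈ s, iteratedDeriv 3 u x + a * deriv u x = r x) (n : ℕ) {x : ℝ} (hx : x ∈ s) :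
    iteratedDeriv (n + 3) u x = iteratedDeriv n r x - a * iteratedDeriv (n + 1) u x := by
  have hu₁ : ContDiff ℝ ∞ fun x => a * iteratedDeriv 1 u x :=
    contDiff_const.mul (contDiff_iteratedDeriv hu 1)
  have hu₃ : EqOn (iteratedDeriv 3 u) (fun x => r x - a * iteratedDeriv 1 u x) s := fun x hx => by
    simp only [iteratedDeriv_one, ← hode x hx, add_sub_cancel_right]
  have hn := eqOn_iteratedDeriv_of_uniqueDiffOn (contDiff_iteratedDeriv hu 3) (hr.sub hu₁) hs hu₃ n
    hx
  rwa [iteratedDeriv_iteratedDeriv, iteratedDeriv_fun_sub (hr.of_le (mod_cast le_top)).contDiffAt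
    (hu₁.of_le (mod_cast le_top)).contDiffAt, iteratedDeriv_const_mul_field,
    iteratedDeriv_iteratedDeriv] at hn

theorem mul_abs_pow_div_factorial_le {x B : ℝ} (hx : x ∈ Icc (-1 : ℝ) 0) (hB : 0 ≤ B) (m : ℕ) :
    B * (|x| ^ m / m !) ≤ B / m ! := by
  rw [← mul_one_div B]
  gcongr
  exact pow_le_one₀ (abs_nonneg x) (abs_le.2 ⟨hx.1, hx.2.trans zero_le_one⟩)

theorem abs_neg_sub_mul_le {a p q Y : ℝ} {n : ℕ} (hp : |p| ≤ (1 + |a|) ^ n * Y)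
    (hq : |q| ≤ (1 + |a|) ^ (n + 1) * Y) : |-p - a * q| ≤ (1 + |a|) ^ (n + 3) * Y := by
  have hb : 0 ≤ |a| := abs_nonneg a
  calc |-p - a * q| ≤ |p| + |a| * |q| := by
        rw [← abs_neg p, ← abs_mul]
        exact abs_sub _ _
    _ ≤ (1 + |a|) ^ n * Y + |a| * ((1 + |a|) ^ (n + 1) * Y) := by gcongr
    _ = (1 + |a|) ^ n * Y * (1 + |a| * (1 + |a|)) := by ring
    _ ≤ (1 + |a|) ^ n * Y * (1 + |a|) ^ 3 :=
        mul_le_mul_of_nonneg_left (by nlinarith [pow_nonneg hb 2, pow_nonneg hb 3])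
          ((abs_nonneg p).trans hp)
    _ = (1 + |a|) ^ (n + 3) * Y := by ring

namespace IsGeneratingFamily

variable {a : ℝ} {g : ℕ → ℝ → ℝ} (hg : IsGeneratingFamily a g)
include hg

theorem hasDerivAt (i : ℕ) (x : ℝ) : HasDerivAt (g i) (deriv (g i) x) x :=
  ((hg.contDiff i).differentiable (by simp) x).hasDerivAt

theorem hasDerivAt_deriv (i : ℕ) (x : ℝ) :
    HasDerivAt (deriv (g i)) (iteratedDeriv 2 (g i) x) x := by
  simpa only [iteratedDeriv_one] using hasDerivAt_iteratedDeriv (hg.contDiff i) 1 x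

theorem hasDerivAt_oscillator (i : ℕ) (x : ℝ) :
    HasDerivAt (fun x => iteratedDeriv 2 (g i) x + a * g i x)
      (iteratedDeriv 3 (g i) x + a * deriv (g i) x) x :=
  (hasDerivAt_iteratedDeriv (hg.contDiff i) 2 x).add ((hg.hasDerivAt i x).const_mul a)

theorem oscillator_zero_eq_one {x : ℝ} (hx : x ∈ Icc (-1 : ℝ) 0) :
    iteratedDeriv 2 (g 0) x + a * g 0 x = 1 := by
  have hle := norm_le_of_norm_deriv_le_pow_div_factorial (D := 0) (m := 0) hx.2
    (fun y => (hg.hasDerivAt_oscillator 0 y).sub_const 1)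
    (by simp [hg.iteratedDeriv_two_zero, hg.apply_zero])
    fun y hy => by rw [hg.ode_zero y ⟨hx.1.trans hy.1, hy.2⟩]; simp
  rw [zero_mul, norm_le_zero_iff] at hle
  exact sub_eq_zero.1 hle

theorem abs_oscillator_le (i : ℕ) {x : ℝ} (hx : x ∈ Icc (-1 : ℝ) 0) :
    |iteratedDeriv 2 (g i) x + a * g i x| ≤ oscillatorBound a ^ i * (|x| ^ (3 * i) / (3 * i)!) := by
  induction i generalizing x with
  | zero => simp [hg.oscillator_zero_eq_one hx]
  | succ i ih =>
    refine norm_le_of_norm_deriv_le_pow_div_factorial hx.2 (hg.hasDerivAt_oscillator (i + 1))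
      (by simp [hg.iteratedDeriv_two_succ, hg.apply_zero]) fun y hy => ?_
    have hy' : y ∈ Icc (-1 : ℝ) 0 := ⟨hx.1.trans hy.1, hy.2⟩
    rw [hg.ode_succ i y hy', norm_neg, pow_succ']
    exact abs_le_of_abs_oscillator_le (hg.hasDerivAt i) (hg.hasDerivAt_deriv i) (hg.apply_zero i)
      (hg.deriv_zero i) (fun _ => ih) hy'

theorem abs_deriv_le (i : ℕ) {x : ℝ} (hx : x ∈ Icc (-1 : ℝ) 0) :
    |deriv (g i) x| ≤ oscillatorBound a ^ (i + 1) * (|x| ^ (3 * i + 1) / (3 * i + 1)!) := by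
  rw [pow_succ']
  exact abs_deriv_le_of_abs_oscillator_le (hg.hasDerivAt i) (hg.hasDerivAt_deriv i)
    (hg.apply_zero i) (hg.deriv_zero i) (fun _ => hg.abs_oscillator_le i) hx

theorem abs_apply_le (i : ℕ) {x : ℝ} (hx : x ∈ Icc (-1 : ℝ) 0) :
    |g i x| ≤ oscillatorBound a ^ (i + 1) * (|x| ^ (3 * i + 2) / (3 * i + 2)!) := by
  rw [pow_succ']
  exact abs_le_of_abs_oscillator_le (hg.hasDerivAt i) (hg.hasDerivAt_deriv i)
    (hg.apply_zero i) (hg.deriv_zero i) (fun _ => hg.abs_oscillator_le i) hx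

theorem abs_iteratedDeriv_two_le (i : ℕ) {x : ℝ} (hx : x ∈ Icc (-1 : ℝ) 0) :
    |iteratedDeriv 2 (g i) x| ≤ (1 + |a|) * (oscillatorBound a ^ (i + 1) / (3 * i)!) := by
  have hA := one_le_oscillatorBound a
  have hosc : |iteratedDeriv 2 (g i) x + a * g i x| ≤ oscillatorBound a ^ (i + 1) / (3 * i)! := by
    refine ((hg.abs_oscillator_le i hx).trans
      (mul_abs_pow_div_factorial_le hx (by positivity) _)).trans ?_
    gcongr
    omega
  have hgi : |g i x| ≤ oscillatorBound a ^ (i + 1) / (3 * i)! := by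
    refine ((hg.abs_apply_le i hx).trans
      (mul_abs_pow_div_factorial_le hx (by positivity) _)).trans ?_
    gcongr
    omega
  calc |iteratedDeriv 2 (g i) x| = |iteratedDeriv 2 (g i) x + a * g i x - a * g i x| := by
        rw [add_sub_cancel_right]
    _ ≤ |iteratedDeriv 2 (g i) x + a * g i x| + |a| * |g i x| := by
        rw [← abs_mul]
        exact abs_sub _ _
    _ ≤ oscillatorBound a ^ (i + 1) / (3 * i)! +
          |a| * (oscillatorBound a ^ (i + 1) / (3 * i)!) := by gcongr
    _ = (1 + |a|) * (oscillatorBound a ^ (i + 1) / (3 * i)!) := by ring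

theorem iteratedDeriv_add_three_zero (n : ℕ) {x : ℝ} (hx : x ∈ Icc (-1 : ℝ) 0) :
    iteratedDeriv (n + 3) (g 0) x = -(a * iteratedDeriv (n + 1) (g 0) x) := by
  rw [iteratedDeriv_add_three_of_ode (hg.contDiff 0) contDiff_const
    (uniqueDiffOn_Icc (by norm_num)) hg.ode_zero n hx, iteratedDeriv_fun_const_zero, zero_sub]

theorem iteratedDeriv_add_three_succ (i n : ℕ) {x : ℝ} (hx : x ∈ Icc (-1 : ℝ) 0) :
    iteratedDeriv (n + 3) (g (i + 1)) x =
      -iteratedDeriv n (g i) x - a * iteratedDeriv (n + 1) (g (i + 1)) x := by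
  rw [iteratedDeriv_add_three_of_ode (hg.contDiff (i + 1)) (hg.contDiff i).neg
    (uniqueDiffOn_Icc (by norm_num)) (hg.ode_succ i) n hx, iteratedDeriv_fun_neg]

-- The subtraction truncates, so that the factorial is `1` once `3 * i + 2 ≤ n`.
theorem abs_iteratedDeriv_le (i n : ℕ) {x : ℝ} (hx : x ∈ Icc (-1 : ℝ) 0) :
    |iteratedDeriv n (g i) x| ≤
      (1 + |a|) ^ n * (oscillatorBound a ^ (i + 1) / (3 * i + 2 - n)!) := by
  have hA := one_le_oscillatorBound a
  have hb : 1 ≤ 1 + |a| := le_add_of_nonneg_right (abs_nonneg a)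
  induction n using Nat.strong_induction_on generalizing i with
  | _ n ih =>
  match n, ih with
  | 0, _ =>
    simpa using (hg.abs_apply_le i hx).trans (mul_abs_pow_div_factorial_le hx (by positivity) _)
  | 1, _ =>
    rw [iteratedDeriv_one, pow_one]
    exact ((hg.abs_deriv_le i hx).trans (mul_abs_pow_div_factorial_le hx (by positivity) _)).trans
      (le_mul_of_one_le_left (by positivity) hb)
  | 2, _ =>
    refine (hg.abs_iteratedDeriv_two_le i hx).trans ?_
    gcongr
    exacts [le_self_pow₀ hb two_ne_zero, by omega]
  | n + 3, ih =>
    have hmono : |iteratedDeriv (n + 1) (g i) x| ≤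
        (1 + |a|) ^ (n + 1) * (oscillatorBound a ^ (i + 1) / (3 * i + 2 - (n + 3))!) := by
      refine (ih (n + 1) (by omega) i).trans ?_
      gcongr
      omega
    cases i with
    | zero =>
      rw [hg.iteratedDeriv_add_three_zero n hx, ← zero_sub, ← neg_zero]
      exact abs_neg_sub_mul_le (by rw [abs_zero]; positivity) hmono
    | succ i =>
      rw [hg.iteratedDeriv_add_three_succ i n hx]
      refine abs_neg_sub_mul_le ((ih n (by omega) i).trans ?_) hmono
      rw [show 3 * (i + 1) + 2 - (n + 3) = 3 * i + 2 - n by omega]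
      gcongr
      exact i.le_succ

theorem pde_of_hasSum {x : ℝ} (hx : x ∈ Icc (-1 : ℝ) 0) {w : ℕ → ℝ} {S₁ S₂ S₃ : ℝ}
    (h₁ : HasSum (fun i => g i x * w (i + 1)) S₁)
    (h₂ : HasSum (fun i => iteratedDeriv 3 (g i) x * w i) S₂)
    (h₃ : HasSum (fun i => deriv (g i) x * w i) S₃) : S₁ + S₂ + a * S₃ = 0 := by
  have hP : HasSum (fun i => (iteratedDeriv 3 (g i) x + a * deriv (g i) x) * w i) (S₂ + a * S₃) :=
    (h₂.add (h₃.mul_left a)).congr_fun fun i => by ring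
  have hsucc : ∀ i, (iteratedDeriv 3 (g (i + 1)) x + a * deriv (g (i + 1)) x) * w (i + 1) =
      -(g i x * w (i + 1)) := fun i => by rw [hg.ode_succ i x hx, neg_mul]
  rw [← hasSum_nat_add_iff' 1] at hP
  simp only [hsucc, Finset.sum_range_one, hg.ode_zero x hx, zero_mul, sub_zero] at hP
  linarith [hP.unique h₁.neg]

theorem hasSum_iteratedDeriv_two_mul (w : ℕ → ℝ) :
    HasSum (fun i => iteratedDeriv 2 (g i) 0 * w i) (w 0) := by
  have hsingle := hasSum_single (f := fun i => iteratedDeriv 2 (g i) 0 * w i) 0 fun i hi => by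
    obtain ⟨j, rfl⟩ := Nat.exists_eq_succ_of_ne_zero hi
    rw [hg.iteratedDeriv_two_succ, zero_mul]
  rwa [hg.iteratedDeriv_two_zero, one_mul] at hsingle

end IsGeneratingFamily

end GeneratingFamily

section Factorial

theorem factorial_add_le (m n : ℕ) : (m + n)! ≤ 2 ^ (m + n) * (m ! * n !) := by
  rw [← Nat.add_choose_mul_factorial_mul_factorial m n, mul_assoc]
  gcongr
  exact Nat.choose_le_two_pow _ _

theorem factorial_le_two_pow_mul_factorial_mul_factorial_sub (m n : ℕ) :
    m ! ≤ 2 ^ m * (n ! * (m - n)!) := by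
  rcases le_total n m with h | h
  · simpa only [Nat.add_sub_cancel' h] using factorial_add_le n (m - n)
  · calc m ! ≤ n ! := Nat.factorial_le h
      _ = 1 * (n ! * 1) := by ring
      _ ≤ 2 ^ m * (n ! * (m - n)!) := by
        gcongr
        exacts [Nat.one_le_two_pow, Nat.factorial_pos _]

theorem factorial_pow_le_factorial_mul (k i : ℕ) : i ! ^ k ≤ (k * i)! := by
  simpa using Nat.le_of_dvd (Nat.factorial_pos _)
    (Nat.prod_factorial_dvd_factorial_sum (Finset.range k) fun _ => i)

theorem exists_pow_le_mul_factorial_rpow {W τ : ℝ} (hW : 0 ≤ W) (hτ : 0 < τ) :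
    ∃ C : ℝ, 0 < C ∧ ∀ k : ℕ, W ^ k ≤ C * (k ! : ℝ) ^ τ := by
  obtain ⟨C, hC⟩ :=
    (FloorSemiring.tendsto_pow_div_factorial_atTop (W ^ τ⁻¹)).bddAbove_range
  refine ⟨max C 1 ^ τ, by positivity, fun k => ?_⟩
  have hk : (W ^ τ⁻¹) ^ k ≤ max C 1 * k ! :=
    (div_le_iff₀ (by positivity)).1 ((hC ⟨k, rfl⟩).trans (le_max_left _ _))
  calc W ^ k = ((W ^ τ⁻¹) ^ k) ^ τ := by
        rw [← Real.rpow_pow_comm (by positivity), Real.rpow_inv_rpow hW hτ.ne']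
    _ ≤ (max C 1 * k !) ^ τ := by gcongr
    _ = max C 1 ^ τ * (k ! : ℝ) ^ τ := Real.mul_rpow (by positivity) (by positivity)

theorem factorial_rpow_le {s : ℝ} (hs : 0 ≤ s) (hs3 : s ≤ 3) (i n : ℕ) :
    (i ! : ℝ) ^ s ≤ 4 * 8 ^ i * ((n ! : ℝ) ^ (s / 3) * ((3 * i + 2 - n)! : ℝ) ^ (s / 3)) := by
  have hcube : (i ! : ℝ) ^ 3 ≤ 2 ^ (3 * i + 2) * (n ! * (3 * i + 2 - n)!) := mod_cast
    ((factorial_pow_le_factorial_mul 3 i).trans (Nat.factorial_le (Nat.le_add_right _ 2))).trans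
      (factorial_le_two_pow_mul_factorial_mul_factorial_sub (3 * i + 2) n)
  calc (i ! : ℝ) ^ s = ((i ! : ℝ) ^ 3) ^ (s / 3) := by
        rw [← Real.rpow_natCast, ← Real.rpow_mul (by positivity), Nat.cast_ofNat,
          mul_div_cancel₀ s three_ne_zero]
    _ ≤ (2 ^ (3 * i + 2) * (n ! * (3 * i + 2 - n)!)) ^ (s / 3) := by gcongr
    _ = ((2 : ℝ) ^ (3 * i + 2)) ^ (s / 3) *
          ((n ! : ℝ) ^ (s / 3) * ((3 * i + 2 - n)! : ℝ) ^ (s / 3)) := by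
        rw [Real.mul_rpow (by positivity) (by positivity),
          Real.mul_rpow (by positivity) (by positivity)]
    _ ≤ 2 ^ (3 * i + 2) * ((n ! : ℝ) ^ (s / 3) * ((3 * i + 2 - n)! : ℝ) ^ (s / 3)) := by
        gcongr
        exact Real.rpow_le_self_of_one_le (one_le_pow₀ one_le_two) (by linarith)
    _ = 4 * 8 ^ i * ((n ! : ℝ) ^ (s / 3) * ((3 * i + 2 - n)! : ℝ) ^ (s / 3)) := by
        rw [pow_add, pow_mul]
        norm_num only
        ring

-- Since `s < 3`, a positive power of `(3 i + 2 - n)!` is left over, which absorbs `P ^ i`.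
theorem exists_pow_mul_factorial_rpow_div_le {s P : ℝ} (hs : 0 ≤ s) (hs3 : s < 3) (hP : 0 ≤ P) :
    ∃ C W : ℝ, 0 < C ∧ 0 < W ∧ ∀ i n : ℕ,
      P ^ i * (i ! : ℝ) ^ s / (3 * i + 2 - n)! ≤ C * W ^ n * (n ! : ℝ) ^ (s / 3) := by
  set W := max 1 (8 * P)
  have hW : 1 ≤ W := le_max_left _ _
  obtain ⟨C, hC, hCW⟩ := exists_pow_le_mul_factorial_rpow (zero_le_one.trans hW)
    (τ := 1 - s / 3) (by linarith)
  refine ⟨4 * C, W, by positivity, by positivity, fun i n => ?_⟩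
  have hi : i ≤ n + (3 * i + 2 - n) := by omega
  set k := 3 * i + 2 - n
  have hk : (0 : ℝ) < k ! := by positivity
  have hgeom : (8 * P) ^ i ≤ W ^ n * (C * (k ! : ℝ) ^ (1 - s / 3)) :=
    calc (8 * P) ^ i ≤ W ^ i := by gcongr; exact le_max_right _ _
      _ ≤ W ^ (n + k) := pow_le_pow_right₀ hW hi
      _ = W ^ n * W ^ k := pow_add ..
      _ ≤ W ^ n * (C * (k ! : ℝ) ^ (1 - s / 3)) := by gcongr; exact hCW k
  rw [div_le_iff₀ hk]
  calc P ^ i * (i ! : ℝ) ^ s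
      ≤ P ^ i * (4 * 8 ^ i * ((n ! : ℝ) ^ (s / 3) * (k ! : ℝ) ^ (s / 3))) := by
        gcongr
        exact factorial_rpow_le hs hs3.le i n
    _ = 4 * (8 * P) ^ i * ((n ! : ℝ) ^ (s / 3) * (k ! : ℝ) ^ (s / 3)) := by
        rw [mul_pow]
        ring
    _ ≤ 4 * (W ^ n * (C * (k ! : ℝ) ^ (1 - s / 3))) *
          ((n ! : ℝ) ^ (s / 3) * (k ! : ℝ) ^ (s / 3)) := by gcongr
    _ = 4 * C * W ^ n * (n ! : ℝ) ^ (s / 3) * ((k ! : ℝ) ^ (1 - s / 3) * (k ! : ℝ) ^ (s / 3)) := by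
        ring
    _ = 4 * C * W ^ n * (n ! : ℝ) ^ (s / 3) * k ! := by
        rw [← Real.rpow_add hk, sub_add_cancel, Real.rpow_one]

theorem factorial_add_rpow_le {s : ℝ} (hs : 0 ≤ s) (i n : ℕ) :
    ((i + n)! : ℝ) ^ s ≤ (2 ^ s) ^ (i + n) * ((i ! : ℝ) ^ s * (n ! : ℝ) ^ s) := by
  calc ((i + n)! : ℝ) ^ s ≤ (2 ^ (i + n) * (i ! * n !)) ^ s := by
        gcongr
        exact_mod_cast factorial_add_le i n
    _ = (2 ^ s) ^ (i + n) * ((i ! : ℝ) ^ s * (n ! : ℝ) ^ s) := by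
        rw [Real.mul_rpow (by positivity) (by positivity),
          Real.mul_rpow (by positivity) (by positivity), Real.rpow_pow_comm zero_le_two]

theorem gevrey_bound_add_le {s M R : ℝ} (hs : 0 ≤ s) (hM : 0 ≤ M) (hR : 0 ≤ R) (i n : ℕ) :
    M * ((i + n)! : ℝ) ^ s / R ^ (i + n) ≤
      (2 ^ s / R) ^ i * (i ! : ℝ) ^ s * (M * (2 ^ s / R) ^ n * (n ! : ℝ) ^ s) := by
  calc M * ((i + n)! : ℝ) ^ s / R ^ (i + n)
      ≤ M * ((2 ^ s) ^ (i + n) * ((i ! : ℝ) ^ s * (n ! : ℝ) ^ s)) / R ^ (i + n) := by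
        gcongr
        exact factorial_add_rpow_le hs i n
    _ = (2 ^ s / R) ^ i * (i ! : ℝ) ^ s * (M * (2 ^ s / R) ^ n * (n ! : ℝ) ^ s) := by
        rw [div_pow, div_pow]
        ring

end Factorial

section FlatSeries

theorem abs_le_of_hasSum_mul {ι : Type*} {u v α β : ι → ℝ} {S A K L : ℝ}
    (hS : HasSum (fun i => u i * v i) S) (hA : HasSum (fun i => α i * β i) A)
    (hu : ∀ i, |u i| ≤ α i * K) (hv : ∀ i, |v i| ≤ β i * L) : |S| ≤ A * (K * L) := by
  rw [← hS.tsum_eq, ← Real.norm_eq_abs]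
  refine tsum_of_norm_bounded (hA.mul_right (K * L)) fun i => ?_
  rw [Real.norm_eq_abs, abs_mul, mul_mul_mul_comm]
  exact mul_le_mul (hu i) (hv i) (abs_nonneg _) ((abs_nonneg _).trans (hu i))

/-- `y` is the sum on `[-1, 0] × [0, T]` of the flatness series `∑ᵢ gᵢ(x) z⁽ⁱ⁾(t)`, and so are all
its mixed derivatives, with termwise differentiated series. -/
def IsFlatSeriesSum (g : ℕ → ℝ → ℝ) (z : ℝ → ℝ) (T : ℝ) (y : ℝ → ℝ → ℝ) : Prop :=
  ∀ m n : ℕ, ∀ x ∈ Icc (-1 : ℝ) 0, ∀ t ∈ Icc (0 : ℝ) T,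
    HasSum (fun i => iteratedDeriv m (g i) x * iteratedDeriv (i + n) z t)
      (iteratedDeriv m (fun x' => iteratedDeriv n (fun t' => y x' t') t) x)

namespace IsGeneratingFamily

variable {a s T M R : ℝ} {g : ℕ → ℝ → ℝ} {z : ℝ → ℝ} {y : ℝ → ℝ → ℝ}
  (hg : IsGeneratingFamily a g)
include hg

theorem exists_abs_iteratedDeriv_le_gevrey (hs : 0 ≤ s) (hs3 : s < 3) {Q : ℝ} (hQ : 0 < Q) :
    ∃ C W : ℝ, 0 < C ∧ 0 < W ∧ ∀ i m, ∀ x ∈ Icc (-1 : ℝ) 0,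
      |iteratedDeriv m (g i) x| ≤
        (1 / 2) ^ i / (Q ^ i * (i ! : ℝ) ^ s) * (C * W ^ m * (m ! : ℝ) ^ (s / 3)) := by
  have hA : 0 < oscillatorBound a := zero_lt_one.trans_le (one_le_oscillatorBound a)
  obtain ⟨C, W, hC, hW, hCW⟩ := exists_pow_mul_factorial_rpow_div_le hs hs3
    (P := 2 * Q * oscillatorBound a) (by positivity)
  refine ⟨oscillatorBound a * C, (1 + |a|) * W, by positivity, by positivity, fun i m x hx => ?_⟩
  calc |iteratedDeriv m (g i) x|
      ≤ (1 + |a|) ^ m * (oscillatorBound a ^ (i + 1) / (3 * i + 2 - m)!) :=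
        hg.abs_iteratedDeriv_le i m hx
    _ = (1 / 2) ^ i / (Q ^ i * (i ! : ℝ) ^ s) * (oscillatorBound a * (1 + |a|) ^ m *
          ((2 * Q * oscillatorBound a) ^ i * (i ! : ℝ) ^ s / (3 * i + 2 - m)!)) := by
        rw [pow_succ, mul_pow, mul_pow, one_div, inv_pow]
        field_simp
    _ ≤ (1 / 2) ^ i / (Q ^ i * (i ! : ℝ) ^ s) * (oscillatorBound a * (1 + |a|) ^ m *
          (C * W ^ m * (m ! : ℝ) ^ (s / 3))) := by
        gcongr
        exact hCW i m
    _ = (1 / 2) ^ i / (Q ^ i * (i ! : ℝ) ^ s) *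
          (oscillatorBound a * C * ((1 + |a|) * W) ^ m * (m ! : ℝ) ^ (s / 3)) := by
        rw [mul_pow]
        ring

theorem exists_isFlatSeriesSum (hs : 0 ≤ s) (hs3 : s < 3) (hT : 0 ≤ T) (hz : ContDiff ℝ ∞ z)
    (hM : 0 ≤ M) (hR : 0 < R)
    (hzG : ∀ i, ∀ t ∈ Icc (0 : ℝ) T, |iteratedDeriv i z t| ≤ M * (i ! : ℝ) ^ s / R ^ i) :
    ∃ y : ℝ → ℝ → ℝ, ContDiff ℝ ∞ (fun q : ℝ × ℝ => y q.1 q.2) ∧ IsFlatSeriesSum g z T y ∧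
      ∃ C W : ℝ, 0 < C ∧ 0 < W ∧ ∀ m n : ℕ, ∀ x ∈ Icc (-1 : ℝ) 0, ∀ t ∈ Icc (0 : ℝ) T,
        |iteratedDeriv m (fun x' => iteratedDeriv n (fun t' => y x' t') t) x| ≤
          2 * (C * W ^ m * (m ! : ℝ) ^ (s / 3) * (M * (2 ^ s / R) ^ n * (n ! : ℝ) ^ s)) := by
  set Q := 2 ^ s / R
  have hQ : 0 < Q := by positivity
  set β : ℕ → ℝ := fun i => Q ^ i * (i ! : ℝ) ^ s
  have hβ : ∀ i, 0 < β i := fun i => by positivity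
  have hαβ : HasSum (fun i => (1 / 2) ^ i / β i * β i) 2 :=
    hasSum_geometric_two.congr_fun fun i => div_mul_cancel₀ _ (hβ i).ne'
  obtain ⟨C, W, hC, hW, hgG⟩ := hg.exists_abs_iteratedDeriv_le_gevrey hs hs3 hQ
  have hzβ : ∀ i n, ∀ t ∈ Icc 0 T, |iteratedDeriv n (iteratedDeriv i z) t| ≤
      β i * (M * Q ^ n * (n ! : ℝ) ^ s) := fun i n t ht => by
    rw [iteratedDeriv_iteratedDeriv, add_comm n i]
    exact (hzG (i + n) t ht).trans (gevrey_bound_add_le hs hM hR.le i n)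
  obtain ⟨y, hy, hsum⟩ := exists_contDiff_hasSum_mul (by norm_num) hT hg.contDiff
    (fun i => contDiff_iteratedDeriv hz i) (fun i => div_nonneg (by positivity) (hβ i).le)
    (fun i => (hβ i).le) hgG hzβ hαβ.summable
  refine ⟨y, hy, fun m n x hx t ht => ?_, C, W, hC, hW, fun m n x hx t ht =>
    abs_le_of_hasSum_mul (hsum m n x hx t ht) hαβ (fun i => hgG i m x hx)
      fun i => hzβ i n t ht⟩
  simpa only [iteratedDeriv_iteratedDeriv, add_comm n] using hsum m n x hx t ht

theorem pde_of_isFlatSeriesSum (hy : IsFlatSeriesSum g z T y) {x t : ℝ} (hx : x ∈ Icc (-1 : ℝ) 0)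
    (ht : t ∈ Icc (0 : ℝ) T) :
    deriv (fun t' => y x t') t + iteratedDeriv 3 (fun x' => y x' t) x +
      a * deriv (fun x' => y x' t) x = 0 := by
  have h₁ := hy 0 1 x hx t ht
  have h₂ := hy 3 0 x hx t ht
  have h₃ := hy 1 0 x hx t ht
  simp only [iteratedDeriv_zero, iteratedDeriv_one, add_zero] at h₁ h₂ h₃
  exact hg.pde_of_hasSum (w := fun i => iteratedDeriv i z t) hx h₁ h₂ h₃

theorem cauchyData_of_isFlatSeriesSum (hy : IsFlatSeriesSum g z T y) {t : ℝ}
    (ht : t ∈ Icc (0 : ℝ) T) :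
    y 0 t = 0 ∧ deriv (fun x' => y x' t) 0 = 0 ∧ iteratedDeriv 2 (fun x' => y x' t) 0 = z t := by
  have h₀ : (0 : ℝ) ∈ Icc (-1 : ℝ) 0 := right_mem_Icc.2 (by norm_num)
  have hy₀ := hy 0 0 0 h₀ t ht
  have hy₁ := hy 1 0 0 h₀ t ht
  have hy₂ := hy 2 0 0 h₀ t ht
  simp only [iteratedDeriv_zero, iteratedDeriv_one, add_zero, hg.apply_zero, hg.deriv_zero,
    zero_mul] at hy₀ hy₁ hy₂
  refine ⟨hy₀.unique hasSum_zero, hy₁.unique hasSum_zero, hy₂.unique ?_⟩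
  simpa only [iteratedDeriv_zero] using
    hg.hasSum_iteratedDeriv_two_mul fun i => iteratedDeriv i z t

end IsGeneratingFamily

end FlatSeries

theorem stmt9_general {a T s : ℝ} (hT : 0 ≤ T) (hs : 0 ≤ s) (hs3 : s < 3) {g : ℕ → ℝ → ℝ}
    (hg : IsGeneratingFamily a g) {z : ℝ → ℝ} (hz : ContDiff ℝ ∞ z) {M R : ℝ} (hM : 0 < M)
    (hR : 0 < R)
    (hzG : ∀ i, ∀ t ∈ Icc (0 : ℝ) T, |iteratedDeriv i z t| ≤ M * (i ! : ℝ) ^ s / R ^ i) :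
    ∃ y : ℝ → ℝ → ℝ,
      (∀ x ∈ Icc (-1 : ℝ) 0, ∀ t ∈ Icc (0 : ℝ) T,
        HasSum (fun i => g i x * iteratedDeriv i z t) (y x t)) ∧
      ContDiff ℝ ∞ (fun q : ℝ × ℝ => y q.1 q.2) ∧
      (∃ C R₁ R₂ : ℝ, 0 < C ∧ 0 < R₁ ∧ 0 < R₂ ∧
        ∀ m n : ℕ, ∀ x ∈ Icc (-1 : ℝ) 0, ∀ t ∈ Icc (0 : ℝ) T,
          |iteratedDeriv m (fun x' => iteratedDeriv n (fun t' => y x' t') t) x| ≤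
            C * (m ! : ℝ) ^ (s / 3) * (n ! : ℝ) ^ s / (R₁ ^ m * R₂ ^ n)) ∧
      (∀ x ∈ Ioo (-1 : ℝ) 0, ∀ t ∈ Ioo (0 : ℝ) T,
        deriv (fun t' => y x t') t + iteratedDeriv 3 (fun x' => y x' t) x +
          a * deriv (fun x' => y x' t) x = 0) ∧
      (∀ t ∈ Ioo (0 : ℝ) T,
        y 0 t = 0 ∧ deriv (fun x' => y x' t) 0 = 0 ∧
          iteratedDeriv 2 (fun x' => y x' t) 0 = z t) := by
  obtain ⟨y, hy, hsum, C, W, hC, hW, hbound⟩ :=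
    hg.exists_isFlatSeriesSum hs hs3 hT hz hM.le hR hzG
  refine ⟨y, fun x hx t ht => ?_, hy, ⟨2 * C * M, W⁻¹, (2 ^ s / R)⁻¹, by positivity,
    by positivity, by positivity, fun m n x hx t ht => (hbound m n x hx t ht).trans_eq ?_⟩,
    fun x hx t ht => hg.pde_of_isFlatSeriesSum hsum (Ioo_subset_Icc_self hx)
      (Ioo_subset_Icc_self ht),
    fun t ht => hg.cauchyData_of_isFlatSeriesSum hsum (Ioo_subset_Icc_self ht)⟩
  · simpa only [iteratedDeriv_zero, add_zero] using hsum 0 0 x hx t ht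
  · rw [inv_pow, inv_pow, ← mul_inv, div_inv_eq_mul]
    ring

/-- flatness property, `1 ≤ s < 3`: if `z ∈ G^s([0,T])` then the series
`y(x,t) = Σ_{i≥0} g_i(x) z^{(i)}(t)` converges, the sum `y` is smooth, Gevrey of order
`s/3` in `x` and `s` in `t` on `[-1,0]×[0,T]`, and solves `∂ₜy + ∂ₓ³y + a∂ₓy = 0`
on `(-1,0)×(0,T)` with `y(0,t) = ∂ₓy(0,t) = 0` and `∂ₓ²y(0,t) = z(t)`. -/
theorem stmt9 (a : ℝ) (ha : 0 ≤ a) (T : ℝ) (hT : 0 < T) (s : ℝ) (hs1 : 1 ≤ s) (hs3 : s < 3)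
    (g : ℕ → ℝ → ℝ)
    (hsmooth : ∀ i, ContDiff ℝ (⊤ : ℕ∞) (g i))
    (hode0 : ∀ x ∈ Set.Icc (-1 : ℝ) 0, deriv^[3] (g 0) x + a * deriv (g 0) x = 0)
    (hic00 : g 0 0 = 0) (hic01 : deriv (g 0) 0 = 0) (hic02 : deriv^[2] (g 0) 0 = 1)
    (hode : ∀ i : ℕ, ∀ x ∈ Set.Icc (-1 : ℝ) 0,
      deriv^[3] (g (i + 1)) x + a * deriv (g (i + 1)) x = - g i x)
    (hic0 : ∀ i : ℕ, g (i + 1) 0 = 0) (hic1 : ∀ i : ℕ, deriv (g (i + 1)) 0 = 0)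
    (hic2 : ∀ i : ℕ, deriv^[2] (g (i + 1)) 0 = 0)
    (z : ℝ → ℝ) (hz : ContDiff ℝ (⊤ : ℕ∞) z) (M R : ℝ) (hM : 0 < M) (hR : 0 < R)
    (hzG : ∀ i : ℕ, ∀ t ∈ Set.Icc (0 : ℝ) T,
      |iteratedDeriv i z t| ≤ M * (Nat.factorial i : ℝ) ^ s / R ^ i) :
    ∃ y : ℝ → ℝ → ℝ,
      -- convergence of the series defining `y`
      (∀ x ∈ Set.Icc (-1 : ℝ) 0, ∀ t ∈ Set.Icc (0 : ℝ) T,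
        HasSum (fun i : ℕ => g i x * iteratedDeriv i z t) (y x t)) ∧
      -- `y` is smooth
      ContDiff ℝ (⊤ : ℕ∞) (fun q : ℝ × ℝ => y q.1 q.2) ∧
      -- Gevrey of order `s/3` in `x` and `s` in `t` on `[-1,0]×[0,T]`
      (∃ C R₁ R₂ : ℝ, 0 < C ∧ 0 < R₁ ∧ 0 < R₂ ∧
        ∀ n₁ n₂ : ℕ, ∀ x ∈ Set.Icc (-1 : ℝ) 0, ∀ t ∈ Set.Icc (0 : ℝ) T,
          |iteratedDeriv n₁ (fun x' => iteratedDeriv n₂ (fun t' => y x' t') t) x| ≤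
            C * (Nat.factorial n₁ : ℝ) ^ (s / 3) * (Nat.factorial n₂ : ℝ) ^ s /
              (R₁ ^ n₁ * R₂ ^ n₂)) ∧
      -- the PDE
      (∀ x ∈ Set.Ioo (-1 : ℝ) 0, ∀ t ∈ Set.Ioo (0 : ℝ) T,
        deriv (fun t' => y x t') t + iteratedDeriv 3 (fun x' => y x' t) x +
          a * deriv (fun x' => y x' t) x = 0) ∧
      -- boundary conditions at `x = 0`
      (∀ t ∈ Set.Ioo (0 : ℝ) T,
        y 0 t = 0 ∧ deriv (fun x' => y x' t) 0 = 0 ∧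
          iteratedDeriv 2 (fun x' => y x' t) 0 = z t) := by
  simp only [← iteratedDeriv_eq_iterate] at hode0 hic02 hode hic2
  exact stmt9_general hT.le (zero_le_one.trans hs1) hs3
    ⟨hsmooth, hode0, hode, Nat.and_forall_add_one.1 ⟨hic00, hic0⟩,
      Nat.and_forall_add_one.1 ⟨hic01, hic1⟩, hic02, hic2⟩ hz hM hR hzG
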